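/- A multigraph G = (V,E) is a P(2,1)-graph if and only if G can be constructed from K₁¹ (a single vertex with one loop) or K₂³ (two vertices joined by three parallel edges) by a finite sequence of the following moves: (1a) add a new vertex of degree 2 joined by single edges to two distinct existing vertices; (1b) add a new vertex joined by two parallel edges to one existing vertex; (2a) delete an edge v₁v₂ with v₁ ≠ v₂ and add a new vertex v₀ of degree 3 adjacent to v₁, v₂ and some existing vertex v₃; (2b) delete an edge v₁v₂ with v₁ ≠ v₂ and add a new vertex v₀ joined by one edge to v₁ and two parallel edges to v₂. -/

import Mathlib

/-! ### Multigraphs: finite vertex set `V`, finite edge set `E`; each edge `e` has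
endpoints `src e` and `dst e` (loops and parallel edges are allowed). -/

structure Multigraph (V E : Type) where
  src : E → V
  dst : E → V

namespace Multigraph

variable {V E : Type}

/-- `i(X)`: the number of edges both of whose endpoints lie in `X`. -/
def iCount [Fintype E] [DecidableEq V] (G : Multigraph V E) (X : Finset V) : ℕ :=
  (Finset.univ.filter fun e => G.src e ∈ X ∧ G.dst e ∈ X).card

/-- The degree of a vertex (a loop contributes 2). -/
def degree [Fintype E] [DecidableEq V] (G : Multigraph V E) (v : V) : ℕ :=
  (Finset.univ.filter fun e => G.src e = v).card +
    (Finset.univ.filter fun e => G.dst e = v).card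

/-- The set of neighbours of a vertex. -/
def neighborSet (G : Multigraph V E) (v : V) : Set V :=
  {w | ∃ e, (G.src e = v ∧ G.dst e = w) ∨ (G.src e = w ∧ G.dst e = v)}

/-- `(k,ℓ)`-sparsity: `i(X) ≤ k|X| − ℓ` for every `X ⊆ V` spanning at least one edge. -/
def Sparse [Fintype E] [DecidableEq V] (G : Multigraph V E) (k l : ℤ) : Prop :=
  ∀ X : Finset V, (∃ e, G.src e ∈ X ∧ G.dst e ∈ X) →
    (G.iCount X : ℤ) ≤ k * (X.card : ℤ) - l

/-- `(k,ℓ)`-tightness: `(k,ℓ)`-sparse and `|E| = k|V| − ℓ`. -/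
def Tight [Fintype V] [Fintype E] [DecidableEq V] (G : Multigraph V E) (k l : ℤ) : Prop :=
  G.Sparse k l ∧ (Fintype.card E : ℤ) = k * (Fintype.card V : ℤ) - l

/-- Delete a single edge. -/
def deleteEdge (G : Multigraph V E) (e₀ : E) : Multigraph V {e : E // e ≠ e₀} :=
  ⟨fun e => G.src e.1, fun e => G.dst e.1⟩

/-- Delete a vertex together with all edges incident to it. -/
def deleteVertex (G : Multigraph V E) (v : V) :
    Multigraph {w : V // w ≠ v} {e : E // G.src e ≠ v ∧ G.dst e ≠ v} :=
  ⟨fun e => ⟨G.src e.1, e.2.1⟩, fun e => ⟨G.dst e.1, e.2.2⟩⟩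

/-- Add one new edge with endpoints `u` and `w`. -/
def addEdge (G : Multigraph V E) (u w : V) : Multigraph V (E ⊕ Unit) :=
  ⟨Sum.elim G.src fun _ => u, Sum.elim G.dst fun _ => w⟩

/-- The subgraph induced by a set of vertices `X`. -/
def induce (G : Multigraph V E) (X : Finset V) :
    Multigraph {v : V // v ∈ X} {e : E // G.src e ∈ X ∧ G.dst e ∈ X} :=
  ⟨fun e => ⟨G.src e.1, e.2.1⟩, fun e => ⟨G.dst e.1, e.2.2⟩⟩

/-- `G` is a `P(2,1)`-graph: `(2,1)`-tight and some edge-deleted graph is `(2,2)`-tight. -/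
def IsP21 [Fintype V] [Fintype E] [DecidableEq V] [DecidableEq E] (G : Multigraph V E) : Prop :=
  G.Tight 2 1 ∧ ∃ e : E, (G.deleteEdge e).Tight 2 2

/-- `G` is a `(2,2)`-circuit: `|E| = 2|V| − 1` and every edge-deleted graph is `(2,2)`-tight. -/
def IsCircuit22 [Fintype V] [Fintype E] [DecidableEq V] [DecidableEq E]
    (G : Multigraph V E) : Prop :=
  (Fintype.card E : ℤ) = 2 * (Fintype.card V : ℤ) - 1 ∧
    ∀ e : E, (G.deleteEdge e).Tight 2 2

/-- `X` is an over-critical set (`i(X) = 2|X| − 1`) of minimum cardinality. -/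
def IsMinOverCritical [Fintype E] [DecidableEq V] (G : Multigraph V E) (X : Finset V) : Prop :=
  (G.iCount X : ℤ) = 2 * (X.card : ℤ) - 1 ∧
    ∀ Y : Finset V, (G.iCount Y : ℤ) = 2 * (Y.card : ℤ) - 1 → X.card ≤ Y.card

/-- `G` is (a copy of) `K₂³`: two distinct vertices joined by three parallel edges. -/
def IsK23 [Fintype E] (G : Multigraph V E) : Prop :=
  ∃ a b : V, a ≠ b ∧ (∀ v : V, v = a ∨ v = b) ∧ Fintype.card E = 3 ∧
    ∀ e : E, (G.src e = a ∧ G.dst e = b) ∨ (G.src e = b ∧ G.dst e = a)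

/-- Adjacency via an edge belonging to the edge subset `F`. -/
def AdjOn (G : Multigraph V E) (F : Set E) (u w : V) : Prop :=
  ∃ e ∈ F, (G.src e = u ∧ G.dst e = w) ∨ (G.src e = w ∧ G.dst e = u)

/-- Connectivity of the multigraph. -/
def Connected (G : Multigraph V E) : Prop :=
  Nonempty V ∧ ∀ u w : V, Relation.ReflTransGen (G.AdjOn Set.univ) u w

/-- 2-edge-connectivity: connected, and still connected after deleting any one edge. -/
def TwoEdgeConnected (G : Multigraph V E) : Prop :=
  G.Connected ∧ ∀ e₀ : E, ∀ u w : V, Relation.ReflTransGen (G.AdjOn {e | e ≠ e₀}) u w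

/-- Adjacency inside the induced subgraph on the vertex set `X`. -/
def AdjIn (G : Multigraph V E) (X : Set V) (u w : V) : Prop :=
  u ∈ X ∧ w ∈ X ∧ ∃ e, (G.src e = u ∧ G.dst e = w) ∨ (G.src e = w ∧ G.dst e = u)

/-- Connectivity of the induced subgraph on the vertex set `X`. -/
def ConnectedOn (G : Multigraph V E) (X : Set V) : Prop :=
  ∀ u ∈ X, ∀ w ∈ X, Relation.ReflTransGen (G.AdjIn X) u w

/-- `T` is the edge set of a spanning tree of `G`:
the spanning subgraph with edge set `T` is connected and `|T| = |V| − 1`. -/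
def IsSpanningTree [Fintype V] (G : Multigraph V E) (T : Finset E) : Prop :=
  (∀ u w : V, Relation.ReflTransGen (G.AdjOn (T : Set E)) u w) ∧ T.card + 1 = Fintype.card V

/-- `M` is the edge set of a spanning connected map-graph of `G`:
the spanning subgraph with edge set `M` is connected and has exactly `|V|` edges
(equivalently, it is connected with exactly one cycle). -/
def IsConnectedSpanningMapGraph [Fintype V] (G : Multigraph V E) (M : Finset E) : Prop :=
  (∀ u w : V, Relation.ReflTransGen (G.AdjOn (M : Set E)) u w) ∧ M.card = Fintype.card V

/-- `(X, F)` describes a subgraph of `G`: every edge of `F` has both endpoints in `X`. -/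
def IsSubgraphOn (G : Multigraph V E) (X : Finset V) (F : Finset E) : Prop :=
  ∀ e ∈ F, G.src e ∈ X ∧ G.dst e ∈ X

end Multigraph

/-! ### Bundled multigraphs and the (unlabelled) Henneberg operations. -/

structure BMG where
  V : Type
  E : Type
  fV : Fintype V
  fE : Fintype E
  dV : DecidableEq V
  dE : DecidableEq E
  G : Multigraph V E

attribute [instance] BMG.fV BMG.fE BMG.dV BMG.dE

/-- Isomorphism of multigraphs: bijections of vertices and edges preserving the
(unordered) pair of endpoints of every edge. -/
def BMGIso (A B : BMG) : Prop :=
  ∃ (φ : A.V ≃ B.V) (ψ : A.E ≃ B.E), ∀ e : A.E,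
    (B.G.src (ψ e) = φ (A.G.src e) ∧ B.G.dst (ψ e) = φ (A.G.dst e)) ∨
    (B.G.src (ψ e) = φ (A.G.dst e) ∧ B.G.dst (ψ e) = φ (A.G.src e))

/-- Add a new vertex (the vertex `none`) joined by two new edges to `v1` and `v2`. -/
def BMG.addV2 (A : BMG) (v1 v2 : A.V) : BMG where
  V := Option A.V
  E := A.E ⊕ Fin 2
  fV := inferInstance
  fE := inferInstance
  dV := inferInstance
  dE := inferInstance
  G := ⟨Sum.elim (fun e => some (A.G.src e)) fun _ => none,
        Sum.elim (fun e => some (A.G.dst e)) ![some v1, some v2]⟩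

/-- Delete the edge `e₀` and add a new vertex (the vertex `none`) joined by three
new edges to `t1`, `t2`, `t3`. -/
def BMG.split (A : BMG) (e₀ : A.E) (t1 t2 t3 : A.V) : BMG where
  V := Option A.V
  E := {e : A.E // e ≠ e₀} ⊕ Fin 3
  fV := inferInstance
  fE := inferInstance
  dV := inferInstance
  dE := inferInstance
  G := ⟨Sum.elim (fun e => some (A.G.src e.1)) fun _ => none,
        Sum.elim (fun e => some (A.G.dst e.1)) ![some t1, some t2, some t3]⟩

/-- One Henneberg move `A ⟶ B` (up to isomorphism): 1a, 1b, 2a or 2b. -/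
def MStep (A B : BMG) : Prop :=
  -- (1a) add a new vertex of degree 2 joined by single edges to two distinct
  -- existing vertices
  (∃ v1 v2 : A.V, v1 ≠ v2 ∧ BMGIso (A.addV2 v1 v2) B) ∨
  -- (1b) add a new vertex joined by two parallel edges to one existing vertex
  (∃ v : A.V, BMGIso (A.addV2 v v) B) ∨
  -- (2a) delete an edge v1v2 (v1 ≠ v2) and add a new vertex of degree 3 adjacent to
  -- v1, v2 and some existing vertex v3
  (∃ (e₀ : A.E) (v3 : A.V), A.G.src e₀ ≠ A.G.dst e₀ ∧
    v3 ≠ A.G.src e₀ ∧ v3 ≠ A.G.dst e₀ ∧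
    BMGIso (A.split e₀ (A.G.src e₀) (A.G.dst e₀) v3) B) ∨
  -- (2b) delete an edge v1v2 (v1 ≠ v2) and add a new vertex joined by one edge to v1
  -- and two parallel edges to v2
  (∃ (e₀ : A.E) (v1 v2 : A.V), v1 ≠ v2 ∧
    ((A.G.src e₀ = v1 ∧ A.G.dst e₀ = v2) ∨ (A.G.src e₀ = v2 ∧ A.G.dst e₀ = v1)) ∧
    BMGIso (A.split e₀ v1 v2 v2) B)

/-- `K₁¹`: a single vertex with one loop. -/
def K11 : BMG where
  V := Unit
  E := Unit
  fV := inferInstance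
  fE := inferInstance
  dV := inferInstance
  dE := inferInstance
  G := ⟨fun _ => (), fun _ => ()⟩

/-- `K₂³`: two vertices joined by three parallel edges. -/
def K23 : BMG where
  V := Bool
  E := Fin 3
  fV := inferInstance
  fE := inferInstance
  dV := inferInstance
  dE := inferInstance
  G := ⟨fun _ => false, fun _ => true⟩

namespace P21

open Finset

/-- Number of edges of `F` spanned by `X`. -/
def cnt (B : BMG) (F : Finset B.E) (X : Finset B.V) : ℕ :=
  (F.filter fun e => B.G.src e ∈ X ∧ B.G.dst e ∈ X).card

/-- The spanning subgraph with edge set `F` is `(2,2)`-tight. -/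
def TF (B : BMG) (F : Finset B.E) : Prop :=
  (∀ X : Finset B.V, X.Nonempty → cnt B F X + 2 ≤ 2 * X.card) ∧
    F.card + 2 = 2 * Fintype.card B.V

def P (B : BMG) : Prop := ∃ e : B.E, TF B (univ.erase e)

theorem cnt_univ (B : BMG) (F : Finset B.E) : cnt B F univ = F.card := by
  simp [cnt]

theorem cnt_deleteEdge (B : BMG) (e : B.E) (X : Finset B.V) :
    (B.G.deleteEdge e).iCount X = cnt B (univ.erase e) X := by
  unfold Multigraph.iCount cnt Multigraph.deleteEdge
  rw [← Finset.card_map (Function.Embedding.subtype _)]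
  congr 1
  ext f
  simp
  tauto

theorem tight_iff (B : BMG) (e : B.E) :
    (B.G.deleteEdge e).Tight 2 2 ↔ TF B (univ.erase e) := by
  unfold Multigraph.Tight Multigraph.Sparse TF
  have hc : Fintype.card {f : B.E // f ≠ e} = (univ.erase e : Finset B.E).card := by
    rw [Fintype.card_subtype]
    congr 1
    ext f
    simp
  rw [hc]
  refine and_congr ?_ (by omega)
  simp only [cnt_deleteEdge]
  constructor
  · intro h X hX
    have h1 := hX.card_pos
    by_cases h0 : cnt B (univ.erase e) X = 0
    · omega
    · have : ∃ f : {f : B.E // f ≠ e}, (B.G.deleteEdge e).src f ∈ X ∧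
          (B.G.deleteEdge e).dst f ∈ X := by
        obtain ⟨f, hf⟩ := Finset.card_pos.1 (Nat.pos_of_ne_zero h0)
        simp at hf
        exact ⟨⟨f, hf.1⟩, hf.2⟩
      have := h X this
      omega
  · rintro h X ⟨f, hf⟩
    have := h X ⟨_, hf.1⟩
    omega

theorem isP21_iff (B : BMG) : B.G.IsP21 ↔ P B := by
  unfold Multigraph.IsP21 P
  simp only [tight_iff]
  refine ⟨fun h => h.2, fun h => ⟨?_, h⟩⟩
  obtain ⟨e, h1, h2⟩ := h
  rw [card_erase_of_mem (mem_univ e)] at h2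
  have : 0 < Fintype.card B.E := Fintype.card_pos_iff.2 ⟨e⟩
  rw [card_univ] at h2
  refine ⟨?_, by omega⟩
  rintro X ⟨f, hf⟩
  have h3 := h1 X ⟨_, hf.1⟩
  have : B.G.iCount X ≤ cnt B (univ.erase e) X + 1 := by
    unfold Multigraph.iCount cnt
    rw [filter_erase]
    have := Finset.pred_card_le_card_erase
      (s := univ.filter fun e => B.G.src e ∈ X ∧ B.G.dst e ∈ X) (a := e)
    omega
  omega

theorem iso_refl (A : BMG) : BMGIso A A :=
  ⟨Equiv.refl _, Equiv.refl _, fun _ => Or.inl ⟨rfl, rfl⟩⟩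

theorem iso_symm {A B : BMG} (h : BMGIso A B) : BMGIso B A := by
  obtain ⟨φ, ψ, h⟩ := h
  refine ⟨φ.symm, ψ.symm, fun e => ?_⟩
  have := h (ψ.symm e)
  simp only [Equiv.apply_symm_apply] at this
  rcases this with ⟨h1, h2⟩ | ⟨h1, h2⟩ <;> simp [h1, h2]

theorem iso_trans {A B C : BMG} (h : BMGIso A B) (h' : BMGIso B C) : BMGIso A C := by
  obtain ⟨φ, ψ, h⟩ := h
  obtain ⟨φ', ψ', h'⟩ := h'
  refine ⟨φ.trans φ', ψ.trans ψ', fun e => ?_⟩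
  have h1 := h e
  have h2 := h' (ψ e)
  simp only [Equiv.trans_apply]
  rcases h1 with ⟨a, b⟩ | ⟨a, b⟩ <;> rw [a, b] at h2 <;> tauto

theorem P_iso {A B : BMG} (h : BMGIso A B) (hA : P A) : P B := by
  obtain ⟨φ, ψ, h⟩ := h
  obtain ⟨e, h1, h2⟩ := hA
  refine ⟨ψ e, fun X hX => ?_, ?_⟩
  · have h3 := h1 (X.map φ.symm.toEmbedding) (by simpa using hX)
    rw [card_map] at h3
    have : cnt B (univ.erase (ψ e)) X = cnt A (univ.erase e) (X.map φ.symm.toEmbedding) := by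
      unfold cnt
      rw [← Finset.card_map ψ.toEmbedding]
      congr 1
      ext f
      obtain ⟨g, rfl⟩ := ψ.surjective f
      have := h g
      simp only [mem_filter, mem_erase, mem_univ, mem_map_equiv, Equiv.symm_symm,
        Equiv.symm_apply_apply, EmbeddingLike.apply_eq_iff_eq, ne_eq, and_true]
      rcases this with ⟨a, b⟩ | ⟨a, b⟩ <;> rw [a, b] <;> tauto
    omega
  · rw [card_erase_of_mem (mem_univ _), card_univ] at h2 ⊢
    rw [← Fintype.card_congr ψ, ← Fintype.card_congr φ]
    exact h2

/-- Add a vertex `none` joined to the `t i`. -/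
abbrev addK (D : BMG) {k : ℕ} (t : Fin k → D.V) : BMG where
  V := Option D.V
  E := D.E ⊕ Fin k
  fV := inferInstance
  fE := inferInstance
  dV := inferInstance
  dE := inferInstance
  G := ⟨Sum.elim (fun e => some (D.G.src e)) fun _ => none,
        Sum.elim (fun e => some (D.G.dst e)) fun i => some (t i)⟩

abbrev addE (D : BMG) (u w : D.V) : BMG where
  V := D.V
  E := D.E ⊕ Unit
  fV := inferInstance
  fE := inferInstance
  dV := inferInstance
  dE := inferInstance
  G := D.G.addEdge u w

abbrev del (D : BMG) (e : D.E) : BMG where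
  V := D.V
  E := {f : D.E // f ≠ e}
  fV := inferInstance
  fE := inferInstance
  dV := inferInstance
  dE := inferInstance
  G := D.G.deleteEdge e

theorem addV2_eq (A : BMG) (v1 v2 : A.V) : A.addV2 v1 v2 = addK A ![v1, v2] := by
  unfold BMG.addV2 addK
  congr 2
  funext e
  rcases e with e | i
  · rfl
  · fin_cases i <;> rfl

theorem split_eq (A : BMG) (e : A.E) (v1 v2 v3 : A.V) :
    A.split e v1 v2 v3 = addK (del A e) ![v1, v2, v3] := by
  unfold BMG.split addK
  congr 2
  funext e
  rcases e with e | i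
  · rfl
  · fin_cases i <;> rfl

theorem del_iso (A : BMG) (e : A.E) :
    BMGIso A (addE (del A e) (A.G.src e) (A.G.dst e)) := by
  apply iso_symm
  refine ⟨Equiv.refl _, Equiv.ofBijective
    (Sum.elim (fun f : {f : A.E // f ≠ e} => f.1) fun _ : Unit => e) ⟨?_, ?_⟩, ?_⟩
  · rintro (⟨a, ha⟩ | a) (⟨b, hb⟩ | b) h
    · exact congrArg Sum.inl (Subtype.ext h)
    · exact absurd h ha
    · exact absurd h.symm hb
    · rfl
  · intro f
    by_cases hf : f = e
    · exact ⟨Sum.inr (), hf.symm⟩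
    · exact ⟨Sum.inl ⟨f, hf⟩, rfl⟩
  · rintro (f | f) <;> exact Or.inl ⟨rfl, rfl⟩

theorem addK_perm (D : BMG) {k : ℕ} (t : Fin k → D.V) (σ : Equiv.Perm (Fin k)) :
    BMGIso (addK D (fun i => t (σ i))) (addK D t) := by
  refine ⟨Equiv.refl _, Equiv.sumCongr (Equiv.refl _) σ, ?_⟩
  rintro (f | f) <;> exact Or.inl ⟨rfl, rfl⟩

theorem split_addE_iso (D : BMG) (u w v1 v2 v3 : D.V) :
    BMGIso ((addE D u w).split (Sum.inr ()) v1 v2 v3) (addK D ![v1, v2, v3]) := by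
  apply iso_symm
  refine ⟨Equiv.refl _, Equiv.sumCongr (Equiv.ofBijective
    (fun f : D.E => (⟨Sum.inl f, by simp⟩ : {f : D.E ⊕ Unit // f ≠ Sum.inr ()}))
      ⟨?_, ?_⟩) (Equiv.refl _), ?_⟩
  · intro a b h
    simpa using h
  · rintro ⟨f | f, hf⟩
    · exact ⟨f, rfl⟩
    · exact absurd rfl hf
  · rintro (f | f)
    · exact Or.inl ⟨rfl, rfl⟩
    · fin_cases f <;> exact Or.inl ⟨rfl, rfl⟩

theorem cnt_addK_some (D : BMG) {k : ℕ} (t : Fin k → D.V) (F : Finset D.E) (R : Finset (Fin k))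
    (Y : Finset D.V) :
    cnt (addK D t) (F.disjSum R) (Y.map Function.Embedding.some) = cnt D F Y := by
  unfold cnt
  refine Eq.trans (congrArg Finset.card (Finset.ext fun f => Finset.mem_filter.trans ?_))
    (Finset.card_map (Function.Embedding.inl (β := Fin k)))
  rcases f with f | f <;> simp

theorem cnt_addK_none (D : BMG) {k : ℕ} (t : Fin k → D.V) (F : Finset D.E) (R : Finset (Fin k))
    (Y : Finset D.V) :
    cnt (addK D t) (F.disjSum R) (insertNone Y) =
      cnt D F Y + (R.filter fun i => t i ∈ Y).card := by
  unfold cnt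
  rw [← Finset.card_disjSum]
  refine congrArg Finset.card (Finset.ext fun f => Finset.mem_filter.trans ?_)
  rcases f with f | f <;> simp

theorem cnt_addE (D : BMG) (u w : D.V) (F : Finset D.E) (R : Finset Unit)
    (Y : Finset D.V) :
    cnt (addE D u w) (F.disjSum R) Y =
      cnt D F Y + (R.filter fun _ => u ∈ Y ∧ w ∈ Y).card := by
  unfold cnt
  rw [← Finset.card_disjSum]
  refine congrArg Finset.card (Finset.ext fun f => Finset.mem_filter.trans ?_)
  rcases f with f | f
  · simp [Multigraph.addEdge]
  · rw [Finset.inr_mem_disjSum, Finset.inr_mem_disjSum, Finset.mem_filter]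
    rfl

theorem TF_addK_iff (D : BMG) {k : ℕ} (t : Fin k → D.V) (F : Finset D.E) (R : Finset (Fin k)) :
    TF (addK D t) (F.disjSum R) ↔
      (∀ Y : Finset D.V, Y.Nonempty → cnt D F Y + 2 ≤ 2 * Y.card) ∧
      (∀ Y : Finset D.V, cnt D F Y + (R.filter fun i => t i ∈ Y).card ≤ 2 * Y.card) ∧
      F.card + R.card = 2 * Fintype.card D.V := by
  unfold TF
  rw [card_disjSum, Fintype.card_option]
  constructor
  · rintro ⟨h1, h2⟩
    refine ⟨fun Y hY => ?_, fun Y => ?_, by omega⟩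
    · have := h1 (Y.map Function.Embedding.some) (by simpa using hY)
      rwa [cnt_addK_some, card_map] at this
    · have := h1 (insertNone Y) ⟨none, by simp⟩
      rw [cnt_addK_none, card_insertNone] at this
      omega
  · rintro ⟨h1, h2, h3⟩
    refine ⟨fun X hX => ?_, by omega⟩
    by_cases h : none ∈ X
    · have hXY : X = insertNone (eraseNone X) := by
        rw [insertNone_eraseNone, insert_eq_of_mem h]
      have := h2 (eraseNone X)
      rw [hXY, cnt_addK_none, card_insertNone]
      omega
    · have hXY : X = (eraseNone X).map Function.Embedding.some := by
        rw [map_some_eraseNone, erase_eq_of_notMem h]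
      have := h1 (eraseNone X) (by
        rw [hXY] at hX
        exact Finset.map_nonempty.1 hX)
      rw [hXY, cnt_addK_some, card_map]
      omega

theorem TF_addE_univ (D : BMG) (u w : D.V) (F : Finset D.E) :
    TF (addE D u w) (F.disjSum univ) ↔
      (∀ Y : Finset D.V, Y.Nonempty →
        cnt D F Y + (if u ∈ Y ∧ w ∈ Y then 1 else 0) + 2 ≤ 2 * Y.card) ∧
      F.card + 3 = 2 * Fintype.card D.V := by
  unfold TF
  rw [card_disjSum]
  refine and_congr (forall_congr' fun Y => imp_congr_right fun _ => ?_) (by simp)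
  rw [cnt_addE]
  by_cases h : u ∈ Y ∧ w ∈ Y <;> simp [h]

theorem TF_addE_empty (D : BMG) (u w : D.V) (F : Finset D.E) :
    TF (addE D u w) (F.disjSum ∅) ↔ TF D F := by
  unfold TF
  rw [card_disjSum]
  refine and_congr (forall_congr' fun Y => imp_congr_right fun _ => ?_) (by simp)
  rw [cnt_addE]
  simp

theorem erase_inl {α β : Type} [Fintype α] [Fintype β] [DecidableEq α] [DecidableEq β] (a : α) :
    (univ : Finset (α ⊕ β)).erase (Sum.inl a) = (univ.erase a).disjSum univ := by
  ext (f | f) <;> simp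

theorem erase_inr {α β : Type} [Fintype α] [Fintype β] [DecidableEq α] [DecidableEq β] (b : β) :
    (univ : Finset (α ⊕ β)).erase (Sum.inr b) = (univ : Finset α).disjSum (univ.erase b) := by
  ext (f | f) <;> simp

theorem P_addK_iff (D : BMG) {k : ℕ} (t : Fin k → D.V) :
    P (addK D t) ↔ (∃ e, TF (addK D t) ((univ.erase e).disjSum univ)) ∨
      ∃ i, TF (addK D t) (univ.disjSum (univ.erase i)) := by
  unfold P
  constructor
  · rintro ⟨e | e, h⟩
    · left; rw [erase_inl] at h; exact ⟨e, h⟩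
    · right; rw [erase_inr] at h; exact ⟨e, h⟩
  · rintro (⟨e, h⟩ | ⟨e, h⟩)
    · exact ⟨Sum.inl e, by rw [erase_inl]; exact h⟩
    · exact ⟨Sum.inr e, by rw [erase_inr]; exact h⟩

theorem P_addE_iff (D : BMG) (u w : D.V) :
    P (addE D u w) ↔ (∃ e, TF (addE D u w) ((univ.erase e).disjSum univ)) ∨ TF D univ := by
  have h0 : (univ : Finset Unit).erase () = ∅ := rfl
  rw [← TF_addE_empty D u w]
  unfold P
  constructor
  · rintro ⟨e | e, h⟩
    · left; rw [erase_inl] at h; exact ⟨e, h⟩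
    · right; rw [erase_inr, h0] at h; exact h
  · rintro (⟨e, h⟩ | h)
    · exact ⟨Sum.inl e, by rw [erase_inl]; exact h⟩
    · exact ⟨Sum.inr (), by rw [erase_inr, h0]; exact h⟩

/-- adding a vertex of degree two preserves tightness -/
theorem TF_addK_two (D : BMG) {k : ℕ} (t : Fin k → D.V) (F : Finset D.E) (R : Finset (Fin k))
    (hR : R.card = 2) (h : TF D F) : TF (addK D t) (F.disjSum R) := by
  rw [TF_addK_iff]
  refine ⟨h.1, fun Y => ?_, by have := h.2; omega⟩
  rcases Y.eq_empty_or_nonempty with rfl | hY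
  · simp [cnt]
  · have := h.1 Y hY
    have := Finset.card_filter_le R (fun i => t i ∈ Y)
    omega

theorem P_split (D : BMG) (u w : D.V) (t : Fin 3 → D.V)
    (hu : ∃ i, t i = u) (hw : ∃ i, t i = w) (h : P (addE D u w)) : P (addK D t) := by
  rw [P_addK_iff]
  rw [P_addE_iff] at h
  rcases h with ⟨e, h⟩ | h
  · left
    refine ⟨e, ?_⟩
    rw [TF_addE_univ] at h
    rw [TF_addK_iff]
    refine ⟨fun Y hY => by have := h.1 Y hY; omega, fun Y => ?_, by simpa using h.2⟩
    rcases Y.eq_empty_or_nonempty with rfl | hY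
    · simp [cnt]
    have h1 := h.1 Y hY
    have h2 := Finset.card_filter_le univ (fun i => t i ∈ Y)
    by_cases h3 : (univ.filter fun i => t i ∈ Y) = univ
    · have h4 : ∀ i, t i ∈ Y := by simpa using h3
      obtain ⟨i, rfl⟩ := hu
      obtain ⟨j, rfl⟩ := hw
      rw [if_pos ⟨h4 i, h4 j⟩] at h1
      simp at h2
      omega
    · have h5 := Finset.card_lt_card (Finset.ssubset_univ_iff.2 h3)
      simp at h5
      omega
  · exact Or.inr ⟨0, TF_addK_two D t _ _ (by simp) h⟩

theorem P_step {A B : BMG} (h : MStep A B) (hA : P A) : P B := by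
  have h2 : ∀ t : Fin 2 → A.V, P (addK A t) := by
    intro t
    obtain ⟨e, he⟩ := hA
    exact (P_addK_iff A t).2 (Or.inl ⟨e, TF_addK_two A t _ _ (by simp) he⟩)
  have h3 : ∀ (e : A.E) (t : Fin 3 → (del A e).V), (∃ i, t i = A.G.src e) →
      (∃ i, t i = A.G.dst e) → P (addK (del A e) t) := fun e t hu hw =>
    P_split (del A e) _ _ t hu hw (P_iso (del_iso A e) hA)
  rcases h with ⟨v1, v2, -, h⟩ | ⟨v, h⟩ | ⟨e, v3, -, -, -, h⟩ | ⟨e, v1, v2, -, h', h⟩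
  · rw [addV2_eq] at h
    exact P_iso h (h2 _)
  · rw [addV2_eq] at h
    exact P_iso h (h2 _)
  · rw [split_eq] at h
    exact P_iso h (h3 _ _ ⟨0, rfl⟩ ⟨1, rfl⟩)
  · rw [split_eq] at h
    refine P_iso h ?_
    rcases h' with ⟨a, b⟩ | ⟨a, b⟩
    · exact h3 _ _ ⟨0, a.symm⟩ ⟨1, b.symm⟩
    · exact h3 _ _ ⟨1, a.symm⟩ ⟨0, b.symm⟩

theorem P_K11 : P K11 := by
  refine ⟨(), fun X hX => ?_, rfl⟩
  have := hX.card_pos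
  have h : (univ : Finset K11.E).erase () = ∅ := rfl
  rw [h]
  simp [cnt]
  omega

theorem P_K23 : P K23 := by
  refine ⟨(0 : Fin 3), ?_, rfl⟩
  show ∀ X : Finset Bool, X.Nonempty → cnt K23 ((univ : Finset (Fin 3)).erase 0) X + 2 ≤ 2 * X.card
  decide

theorem reduce2 (D : BMG) (t : Fin 2 → D.V) (h : P (addK D t)) : P D := by
  rw [P_addK_iff] at h
  rcases h with ⟨e, h⟩ | ⟨i, h⟩
  · rw [TF_addK_iff] at h
    exact ⟨e, h.1, by simpa using h.2.2⟩
  · rw [TF_addK_iff] at h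
    have h1 := h.1 univ ⟨t 0, mem_univ _⟩
    have h2 := h.2.2
    rw [cnt_univ] at h1
    simp at h1 h2
    omega

theorem cnt_supermodular (D : BMG) (F : Finset D.E) (X Y : Finset D.V) :
    cnt D F X + cnt D F Y ≤ cnt D F (X ∪ Y) + cnt D F (X ∩ Y) := by
  unfold cnt
  rw [← card_union_add_card_inter]
  refine add_le_add (card_le_card ?_) (card_le_card ?_)
  · intro f
    simp only [mem_union, mem_filter]
    tauto
  · intro f
    simp only [mem_inter, mem_filter]
    tauto

theorem exists_perm3 : ∀ i j : Fin 3, i ≠ j → ∃ σ : Equiv.Perm (Fin 3), σ 0 = i ∧ σ 1 = j := by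
  decide

theorem reduce3_aux (D : BMG) (t : Fin 3 → D.V) (e : D.E) 
    (h : TF (addK D t) ((univ.erase e).disjSum univ)) :
    P (addE D (t 0) (t 1)) ∨ (t 1 ≠ t 2 ∧ P (addE D (t 1) (t 2))) := by
  rw [TF_addK_iff] at h
  obtain ⟨h1, h2, h3⟩ := h
  have key : ∀ Y : Finset D.V, t 0 ∈ Y → t 1 ∈ Y → t 2 ∈ Y →
      cnt D (univ.erase e) Y + 3 ≤ 2 * Y.card := by
    intro Y a b c
    have h4 := h2 Y
    have : (univ.filter fun i => t i ∈ Y) = univ := by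
      ext i
      fin_cases i <;> simp [a, b, c]
    rw [this] at h4
    simpa using h4
  have block : ∀ u w : D.V, ¬ P (addE D u w) → ∃ Y : Finset D.V, u ∈ Y ∧ w ∈ Y ∧
      2 * Y.card ≤ cnt D (univ.erase e) Y + 2 := by
    intro u w hP
    by_contra! hc
    apply hP
    rw [P_addE_iff]
    refine Or.inl ⟨e, ?_⟩
    rw [TF_addE_univ]
    refine ⟨fun Y hY => ?_, by simpa using h3⟩
    split_ifs with huw
    · have := hc Y huw.1 huw.2
      omega
    · exact h1 Y hY
  by_contra! hc
  obtain ⟨hc1, hc2⟩ := hc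
  obtain ⟨X, a0, a1, a2⟩ := block _ _ hc1
  have b2 : t 2 ∉ X := fun hb => by
    have := key X a0 a1 hb
    omega
  have h12 : t 1 ≠ t 2 := fun hb => b2 (hb ▸ a1)
  obtain ⟨Y, c1, c2, c3⟩ := block _ _ (hc2 h12)
  have d1 := key (X ∪ Y) (mem_union_left _ a0) (mem_union_left _ a1) (mem_union_right _ c2)
  have d2 := h1 (X ∩ Y) ⟨t 1, mem_inter.2 ⟨a1, c1⟩⟩
  have d3 := cnt_supermodular D (univ.erase e) X Y
  have d4 := card_union_add_card_inter X Y
  omega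

theorem reduce3 (D : BMG) (t : Fin 3 → D.V) (hP : P (addK D t)) (i j : Fin 3) (hij : t i ≠ t j) :
    ∃ σ : Equiv.Perm (Fin 3), t (σ 0) ≠ t (σ 1) ∧ P (addE D (t (σ 0)) (t (σ 1))) := by
  obtain ⟨σ, rfl, rfl⟩ := exists_perm3 i j (fun h => hij (by rw [h]))
  have hP' : P (addK D (fun i => t (σ i))) := P_iso (iso_symm (addK_perm D t σ)) hP
  rw [P_addK_iff] at hP'
  rcases hP' with ⟨e, h⟩ | ⟨k, h⟩
  · rcases reduce3_aux D _ e h with h | ⟨h12, h⟩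
    · exact ⟨σ, hij, h⟩
    · obtain ⟨τ, h0, h1⟩ := exists_perm3 1 2 (by decide)
      refine ⟨τ.trans σ, ?_⟩
      simp only [Equiv.trans_apply, h0, h1]
      exact ⟨h12, h⟩
  · refine ⟨σ, hij, ?_⟩
    rw [P_addE_iff]
    rw [TF_addK_iff] at h
    exact Or.inr ⟨h.1, by simpa using h.2.2⟩

theorem step3 (D B : BMG) (t : Fin 3 → D.V) (hB : BMGIso (addK D t) B) (h01 : t 0 ≠ t 1) :
    MStep (addE D (t 0) (t 1)) B := by
  have ht : t = ![t 0, t 1, t 2] := by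
    funext i; fin_cases i <;> rfl
  by_cases h20 : t 2 = t 0
  · right; right; right
    refine ⟨Sum.inr (), t 1, t 0, h01.symm, Or.inr ⟨rfl, rfl⟩, ?_⟩
    refine iso_trans (split_addE_iso D _ _ _ _ _) (iso_trans ?_ hB)
    refine iso_trans ?_ (addK_perm D t (Equiv.swap 0 1))
    have : (fun i => t (Equiv.swap 0 1 i)) = ![t 1, t 0, t 0] := by
      funext i
      fin_cases i
      · rfl
      · rfl
      · exact h20
    rw [this]
    exact iso_refl _
  · by_cases h21 : t 2 = t 1
    · right; right; right
      refine ⟨Sum.inr (), t 0, t 1, h01, Or.inl ⟨rfl, rfl⟩, ?_⟩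
      refine iso_trans (split_addE_iso D _ _ _ _ _) (iso_trans ?_ hB)
      rw [h21] at ht
      rw [← ht]
      exact iso_refl _
    · right; right; left
      refine ⟨Sum.inr (), t 2, h01, h20, h21, ?_⟩
      refine iso_trans (split_addE_iso D _ _ _ _ _) (iso_trans ?_ hB)
      show BMGIso (addK D ![t 0, t 1, t 2]) (addK D t)
      rw [← ht]
      exact iso_refl _

theorem step2 (D B : BMG) (t : Fin 2 → D.V) (hB : BMGIso (addK D t) B) : MStep D B := by
  have ht : t = ![t 0, t 1] := by
    funext i; fin_cases i <;> rfl
  by_cases h : t 0 = t 1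
  · right; left
    refine ⟨t 0, ?_⟩
    rw [addV2_eq]
    rw [← h] at ht
    rwa [← ht]
  · left
    refine ⟨t 0, t 1, h, ?_⟩
    rw [addV2_eq]
    rwa [← ht]

/-- edges incident to a vertex -/
def inc (B : BMG) (v : B.V) : Finset B.E := univ.filter fun e => B.G.src e = v ∨ B.G.dst e = v

/-- delete a vertex -/
abbrev delV (B : BMG) (v : B.V) : BMG where
  V := {w : B.V // w ≠ v}
  E := {e : B.E // B.G.src e ≠ v ∧ B.G.dst e ≠ v}
  fV := inferInstance
  fE := inferInstance
  dV := inferInstance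
  dE := inferInstance
  G := B.G.deleteVertex v

theorem structure_lemma (B : BMG) (v : B.V) (k : ℕ) (hk : (inc B v).card = k)
    (hl : ∀ e, ¬ (B.G.src e = v ∧ B.G.dst e = v)) :
    ∃ t : Fin k → (delV B v).V, BMGIso (addK (delV B v) t) B ∧
      ∀ w, (∀ i, t i = w) → ∀ e ∈ inc B v,
        (B.G.src e = v ∧ B.G.dst e = w.1) ∨ (B.G.src e = w.1 ∧ B.G.dst e = v) := by
  let f := (Finset.equivFinOfCardEq hk).symm
  have hf : ∀ i, ∃ w : {w : B.V // w ≠ v}, (B.G.src (f i).1 = v ∧ B.G.dst (f i).1 = w.1) ∨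
      (B.G.src (f i).1 = w.1 ∧ B.G.dst (f i).1 = v) := by
    intro i
    have h1 : B.G.src (f i).1 = v ∨ B.G.dst (f i).1 = v := by
      exact (Finset.mem_filter.1 (f i).2).2
    have h2 := hl (f i).1
    rcases h1 with h1 | h1
    · exact ⟨⟨B.G.dst (f i).1, fun h => h2 ⟨h1, h⟩⟩, Or.inl ⟨h1, rfl⟩⟩
    · exact ⟨⟨B.G.src (f i).1, fun h => h2 ⟨h, h1⟩⟩, Or.inr ⟨rfl, h1⟩⟩
  choose t ht using hf
  have hinc : ∀ i, (f i).1 ∈ inc B v := fun i => (f i).2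
  refine ⟨t, ⟨Equiv.optionSubtypeNe v, Equiv.ofBijective
    (Sum.elim (fun e : {e : B.E // B.G.src e ≠ v ∧ B.G.dst e ≠ v} => e.1)
      fun i : Fin k => (f i).1) ⟨?_, ?_⟩, ?_⟩, ?_⟩
  · rintro (⟨a, ha⟩ | a) (⟨b, hb⟩ | b) h
    · exact congrArg Sum.inl (Subtype.ext h)
    · have h' : a = (f b).1 := h
      have := hinc b
      rw [← h'] at this
      simp [inc] at this
      tauto
    · have h' : (f a).1 = b := h
      have := hinc a
      rw [h'] at this
      simp [inc] at this
      tauto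
    · exact congrArg Sum.inr (f.injective (Subtype.ext h))
  · intro e
    by_cases he : e ∈ inc B v
    · exact ⟨Sum.inr (f.symm ⟨e, he⟩), by simp⟩
    · refine ⟨Sum.inl ⟨e, ?_⟩, rfl⟩
      simpa [inc] using he
  · rintro (e | i)
    · left
      simp [Multigraph.deleteVertex]
      exact ⟨rfl, rfl⟩
    · have := ht i
      simp
      exact this
  · intro w hw e he
    have h1 := ht (f.symm ⟨e, he⟩)
    rw [hw] at h1
    simpa using h1

theorem triple_lemma (B : BMG) (e : B.E) (h : TF B (univ.erase e)) (u v w w' : B.V) (huv : u ≠ v)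
    (hv3 : (inc B v).card = 3) (hu3 : (inc B u).card = 3)
    (hv : ∀ f ∈ inc B v, (B.G.src f = v ∧ B.G.dst f = w) ∨ (B.G.src f = w ∧ B.G.dst f = v))
    (hu : ∀ f ∈ inc B u, (B.G.src f = u ∧ B.G.dst f = w') ∨ (B.G.src f = w' ∧ B.G.dst f = u)) :
    BMGIso K23 B := by
  have key : ∀ v w : B.V, (inc B v).card = 3 → (∀ f ∈ inc B v, (B.G.src f = v ∧ B.G.dst f = w) ∨
      (B.G.src f = w ∧ B.G.dst f = v)) → e ∈ inc B v := by
    intro v w h3 hv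
    by_contra he
    have h1 := h.1 {v, w} ⟨v, by simp⟩
    have h2 : (inc B v).card ≤ cnt B (univ.erase e) {v, w} := by
      refine card_le_card fun f hf => ?_
      have h4 : f ≠ e := fun h => he (h ▸ hf)
      have := hv f hf
      simp only [mem_filter, mem_erase, mem_univ, mem_insert, mem_singleton]
      tauto
    have := Finset.card_le_two (a := v) (b := w)
    omega
  have ev := key v w hv3 hv
  have eu := key u w' hu3 hu
  have hwu : w = u := by
    have h1 := hv e ev
    have h2 : B.G.src e = u ∨ B.G.dst e = u := by simpa [inc] using eu
    grind
  subst hwu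
  have hE : (univ.erase e).card + 1 = Fintype.card B.E := by
    rw [card_erase_of_mem (mem_univ _), card_univ]
    have : 0 < Fintype.card B.E := Fintype.card_pos_iff.2 ⟨e⟩
    omega
  have hsub : inc B v ⊆ inc B w := by
    intro f hf
    have := hv f hf
    simp only [inc, mem_filter, mem_univ]
    tauto
  have heq : inc B v = inc B w := eq_of_subset_of_card_le hsub (by omega)
  have huniv : ({w, v} : Finset B.V) = univ := by
    by_contra hne
    have hc2 : ({w, v} : Finset B.V).card = 2 := card_pair huv
    have hcc : ({w, v}ᶜ : Finset B.V).card + 2 = Fintype.card B.V := by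
      rw [card_compl, hc2]
      have := Finset.card_le_univ ({w, v} : Finset B.V)
      omega
    have hX : ({w, v}ᶜ : Finset B.V).Nonempty := by
      rw [nonempty_iff_ne_empty]
      intro h0
      exact hne (compl_eq_empty_iff _ |>.1 h0)
    have h1 := h.1 _ hX
    have h2 := h.2
    have h3 : (univ.erase e).card ≤ cnt B (univ.erase e) ({w, v}ᶜ) + ((inc B v).erase e).card := by
      unfold cnt
      refine le_trans (card_le_card ?_) (card_union_le _ _)
      intro f hf
      have h5 : f ∈ inc B v ↔ f ∈ inc B w := by rw [heq]
      simp only [inc, mem_filter, mem_univ, true_and] at h5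
      simp only [inc, mem_union, mem_filter, mem_erase, mem_univ, mem_compl, mem_insert,
        mem_singleton] at hf ⊢
      tauto
    rw [card_erase_of_mem ev] at h3
    omega
  have hV : Fintype.card B.V = 2 := by
    rw [← card_univ, ← huniv, card_pair huv]
  have hinc : inc B v = univ := by
    rw [← card_eq_iff_eq_univ, hv3]
    have := h.2
    omega
  have hE3 : Fintype.card B.E = 3 := by
    have := h.2
    omega
  refine ⟨Equiv.ofBijective (fun b : Bool => if b then w else v) ⟨?_, ?_⟩,
    (Fintype.equivFinOfCardEq hE3).symm, ?_⟩
  · rintro (_ | _) (_ | _) h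
    · rfl
    · simp at h; exact absurd h.symm huv
    · simp at h; exact absurd h huv
    · rfl
  · intro x
    have : x ∈ ({w, v} : Finset B.V) := by rw [huniv]; simp
    simp at this
    rcases this with rfl | rfl
    · exact ⟨true, rfl⟩
    · exact ⟨false, rfl⟩
  · intro f
    have := hv ((Fintype.equivFinOfCardEq hE3).symm f) (by rw [hinc]; simp)
    exact this

theorem low_vertex (B : BMG) (e : B.E) (h : TF B (univ.erase e)) (hn : 2 ≤ Fintype.card B.V) :
    (∃ v, (inc B v).card = 2 ∧ ∀ f, ¬ (B.G.src f = v ∧ B.G.dst f = v)) ∨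
    ∃ u v, u ≠ v ∧
      ((inc B u).card = 3 ∧ ∀ f, ¬ (B.G.src f = u ∧ B.G.dst f = u)) ∧
      ((inc B v).card = 3 ∧ ∀ f, ¬ (B.G.src f = v ∧ B.G.dst f = v)) := by
  obtain ⟨h1, h2⟩ := h
  have hE : (univ.erase e).card + 1 = Fintype.card B.E := by
    rw [card_erase_of_mem (mem_univ _), card_univ]
    have : 0 < Fintype.card B.E := Fintype.card_pos_iff.2 ⟨e⟩
    omega
  have hl : ∀ f v, f ≠ e → ¬ (B.G.src f = v ∧ B.G.dst f = v) := by
    rintro f v hf ⟨hs, hd⟩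
    have h3 := h1 {v} (by simp)
    have h4 : 0 < cnt B (univ.erase e) {v} := by
      refine card_pos.2 ⟨f, ?_⟩
      simp [hf, hs, hd]
    simp at h3
    omega
  have hinc : ∀ v, 2 ≤ ((inc B v).erase e).card := by
    intro v
    have hc : (univ.erase v : Finset B.V).card + 1 = Fintype.card B.V := by
      rw [card_erase_of_mem (mem_univ _), card_univ]
      omega
    have h3 := h1 (univ.erase v) (card_pos.1 (by omega))
    have h4 : (univ.erase e).card ≤
        cnt B (univ.erase e) (univ.erase v) + ((inc B v).erase e).card := by
      unfold cnt
      refine le_trans (card_le_card ?_) (card_union_le _ _)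
      intro f hf
      simp only [inc, mem_union, mem_filter, mem_erase, mem_univ] at hf ⊢
      tauto
    omega
  have hdeg : ∀ v, B.G.degree v =
      (inc B v).card + (univ.filter fun f => B.G.src f = v ∧ B.G.dst f = v).card := by
    intro v
    unfold Multigraph.degree inc
    rw [filter_or, filter_and, card_union_add_card_inter]
  have hge : ∀ v, ((inc B v).erase e).card ≤ (inc B v).card := fun v => card_erase_le
  have hlow : ∀ v, B.G.degree v ≤ 3 → (inc B v).card = B.G.degree v ∧
      ∀ f, ¬ (B.G.src f = v ∧ B.G.dst f = v) := by
    intro v hv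
    have key : ∀ f, ¬ (B.G.src f = v ∧ B.G.dst f = v) := by
      intro f hf
      have hfe : f = e := by
        by_contra hfe
        exact hl f v hfe hf
      subst hfe
      have h5 : f ∈ inc B v := by simp [inc, hf.1]
      have h6 := card_erase_add_one h5
      have h7 : 0 < (univ.filter fun f => B.G.src f = v ∧ B.G.dst f = v).card :=
        card_pos.2 ⟨f, by simpa using hf⟩
      have := hinc v
      have := hdeg v
      omega
    refine ⟨?_, key⟩
    rw [hdeg v, filter_false_of_mem (fun f _ => key f)]
    simp
  have hsum : ∑ v, B.G.degree v = 2 * Fintype.card B.E := by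
    unfold Multigraph.degree
    rw [sum_add_distrib, ← card_eq_sum_card_fiberwise (fun _ _ => by simp),
      ← card_eq_sum_card_fiberwise (fun _ _ => by simp), card_univ]
    omega
  by_cases hex : ∃ v, B.G.degree v ≤ 2
  · left
    obtain ⟨v, hv⟩ := hex
    have h3 := hlow v (by omega)
    refine ⟨v, ?_, h3.2⟩
    have := hinc v
    have := hge v
    omega
  · right
    push Not at hex
    have hS : 1 < (univ.filter fun v => B.G.degree v = 3).card := by
      have h5 : ∑ v : B.V, 4 ≤ ∑ v, (B.G.degree v + if B.G.degree v = 3 then 1 else 0) := by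
        refine sum_le_sum fun v _ => ?_
        have := hex v
        split_ifs <;> omega
      rw [sum_add_distrib, hsum, ← card_filter] at h5
      simp at h5
      omega
    obtain ⟨u, hu, v, hv, huv⟩ := one_lt_card.1 hS
    simp at hu hv
    have h6 := hlow u (by omega)
    have h7 := hlow v (by omega)
    exact ⟨u, v, huv, ⟨by omega, h6.2⟩, ⟨by omega, h7.2⟩⟩

theorem backward (B : BMG) (hP : P B) :
    (BMGIso K11 B ∨ BMGIso K23 B) ∨
      ∃ A, P A ∧ MStep A B ∧ Fintype.card A.V < Fintype.card B.V := by
  obtain ⟨e, he⟩ := id hP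
  have hE : (univ.erase e).card + 1 = Fintype.card B.E := by
    rw [card_erase_of_mem (mem_univ _), card_univ]
    have : 0 < Fintype.card B.E := Fintype.card_pos_iff.2 ⟨e⟩
    omega
  have hVpos : 0 < Fintype.card B.V := Fintype.card_pos_iff.2 ⟨B.G.src e⟩
  by_cases hn : 2 ≤ Fintype.card B.V
  · have hdc : ∀ v, Fintype.card (delV B v).V < Fintype.card B.V := fun v =>
      Fintype.card_subtype_lt (x := v) (by simp)
    rcases low_vertex B e he hn with ⟨v, hv, hl⟩ | ⟨u, v, huv, ⟨hu, hlu⟩, hv, hlv⟩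
    · right
      obtain ⟨t, ht, -⟩ := structure_lemma B v 2 hv hl
      exact ⟨_, reduce2 _ t (P_iso (iso_symm ht) hP), step2 _ _ t ht, hdc v⟩
    · have main : ∀ v (t : Fin 3 → (delV B v).V), BMGIso (addK (delV B v) t) B →
          (∃ i j, t i ≠ t j) → ∃ A, P A ∧ MStep A B ∧ Fintype.card A.V < Fintype.card B.V := by
        rintro v t ht ⟨i, j, hij⟩
        obtain ⟨σ, h1, h2⟩ := reduce3 _ t (P_iso (iso_symm ht) hP) i j hij
        exact ⟨_, h2, step3 _ _ (fun i => t (σ i)) (iso_trans (addK_perm _ t σ) ht) h1, hdc v⟩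
      obtain ⟨t, ht, hc⟩ := structure_lemma B v 3 hv hlv
      obtain ⟨s, hs, hd⟩ := structure_lemma B u 3 hu hlu
      by_cases h1 : ∃ i j, t i ≠ t j
      · exact Or.inr (main v t ht h1)
      by_cases h2 : ∃ i j, s i ≠ s j
      · exact Or.inr (main u s hs h2)
      push Not at h1 h2
      exact Or.inl (Or.inr (triple_lemma B e he u v _ _ huv hv hu
        (hc (t 0) fun i => h1 i 0) (hd (s 0) fun i => h2 i 0)))
  · left; left
    have hV1 : Fintype.card B.V = 1 := by omega
    have hE1 : Fintype.card B.E = 1 := by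
      have := he.2
      omega
    have hs : Subsingleton B.V := Fintype.card_le_one_iff_subsingleton.1 hV1.le
    refine ⟨Fintype.equivOfCardEq (hV1.symm ▸ rfl), Fintype.equivOfCardEq (hE1.symm ▸ rfl), ?_⟩
    intro f
    exact Or.inl ⟨Subsingleton.elim _ _, Subsingleton.elim _ _⟩

theorem construct (n : ℕ) : ∀ B : BMG, Fintype.card B.V = n → P B →
    ∃ A : BMG, (BMGIso K11 A ∨ BMGIso K23 A) ∧ Relation.ReflTransGen MStep A B := by
  induction n using Nat.strong_induction_on with
  | _ n ih =>
    rintro B rfl hP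
    rcases backward B hP with h | ⟨A, hA, hs, hlt⟩
    · exact ⟨B, h, Relation.ReflTransGen.refl⟩
    · obtain ⟨C, hC, hr⟩ := ih _ hlt A rfl hA
      exact ⟨C, hC, hr.tail hs⟩

theorem P_iff (B : BMG) : P B ↔
    ∃ A : BMG, (BMGIso K11 A ∨ BMGIso K23 A) ∧ Relation.ReflTransGen MStep A B := by
  refine ⟨construct _ B rfl, ?_⟩
  rintro ⟨A, hA, hr⟩
  have hPA : P A := by
    rcases hA with h | h
    · exact P_iso h P_K11
    · exact P_iso h P_K23
  induction hr with
  | refl => exact hPA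
  | tail _ hs ih => exact P_step hs ih

end P21

/-- A multigraph `G` is a `P(2,1)`-graph iff it can be constructed
from `K₁¹` or `K₂³` by a finite sequence of the moves 1a, 1b, 2a, 2b. -/
theorem statement_3 {V E : Type} [Fintype V] [Fintype E] [DecidableEq V] [DecidableEq E]
    (G : Multigraph V E) :
    G.IsP21 ↔
      ∃ A : BMG, (BMGIso K11 A ∨ BMGIso K23 A) ∧
        Relation.ReflTransGen MStep A
          ⟨V, E, inferInstance, inferInstance, inferInstance, inferInstance, G⟩ := by
  exact (P21.isP21_iff ⟨V, E, inferInstance, inferInstance, inferInstance, inferInstance, G⟩).trans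
    (P21.P_iff _)
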